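/- arXiv:2207.06466 — 3 statements merged into one kernel-verified Lean document; each statement's English description precedes it below -/
import Mathlib

section
/- Let Γ be a graph of order N ≥ 3. If the minimum degree of Γ satisfies δ(Γ) ≥ (N+2)/2, then Γ is edge pancyclic. -/
open Finset in
/-- Two index predicates on `range n` whose values cover large sets have a common index. -/
theorem exists_common_index {V : Type*} (n : ℕ) (f g : ℕ → V) (S T : Finset V)
    (hS : ∀ s ∈ S, ∃ i < n, f i = s) (hT : ∀ t ∈ T, ∃ i < n, g i = t)
    (h : n < S.card + T.card) : ∃ i < n, f i ∈ S ∧ g i ∈ T := by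
  classical
  have hA : S.card ≤ ((range n).filter (fun i => f i ∈ S)).card := by
    refine Finset.card_le_card_of_surjOn f ?_
    intro s hs
    obtain ⟨i, hi, rfl⟩ := hS s hs
    exact ⟨i, by simpa [hi] using hs, rfl⟩
  have hB : T.card ≤ ((range n).filter (fun i => g i ∈ T)).card := by
    refine Finset.card_le_card_of_surjOn g ?_
    intro s hs
    obtain ⟨i, hi, rfl⟩ := hT s hs
    exact ⟨i, by simpa [hi] using hs, rfl⟩
  by_contra! hcon
  have hd : Disjoint ((range n).filter (fun i => f i ∈ S))
      ((range n).filter (fun i => g i ∈ T)) := by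
    rw [Finset.disjoint_left]
    intro i hi hj
    simp only [mem_filter, mem_range] at hi hj
    exact hcon i hi.1 hi.2 hj.2
  have h1 := Finset.card_union_of_disjoint hd
  have h2 : ((range n).filter (fun i => f i ∈ S) ∪ (range n).filter (fun i => g i ∈ T)).card
      ≤ (range n).card := by
    apply Finset.card_le_card
    intro i hi
    simp only [mem_union, mem_filter] at hi
    tauto
  rw [card_range] at h2
  omega

open Finset in
/-- The theorem of Dirac, for the subgraph induced on a finset `S`. -/
theorem dirac_aux {V : Type*} [DecidableEq V] (G : SimpleGraph V) [DecidableRel G.Adj]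
    (S : Finset V) (hne : S.Nonempty)
    (hdeg : ∀ v ∈ S, S.card ≤ 2 * (S.filter (G.Adj v)).card) :
    ∃ l : List V, l.Nodup ∧ (∀ w, w ∈ l ↔ w ∈ S) ∧ Cycle.Chain G.Adj (l : Cycle V) := by
  -- a longest path
  have hbound : ∀ l : List V, l.Nodup → (∀ w ∈ l, w ∈ S) → l.length ≤ S.card := by
    intro l hl hS
    rw [← List.toFinset_card_of_nodup hl]
    apply Finset.card_le_card
    intro w hw
    exact hS w (List.mem_toFinset.1 hw)
  obtain ⟨l, ⟨hl, hlS, hlc⟩, hmax⟩ : ∃ l : List V,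
      (l.Nodup ∧ (∀ w ∈ l, w ∈ S) ∧ l.IsChain G.Adj) ∧
      ∀ l' : List V, l'.Nodup → (∀ w ∈ l', w ∈ S) → l'.IsChain G.Adj →
        l'.length ≤ l.length := by
    let P : ℕ → Prop := fun m => ∃ l : List V, l.length = m ∧
      (l.Nodup ∧ (∀ w ∈ l, w ∈ S) ∧ l.IsChain G.Adj)
    have hP0 : P 0 := ⟨[], by simp⟩
    have := Classical.decPred P
    obtain ⟨l, hlm, hl⟩ := Nat.findGreatest_spec (P := P) (Nat.zero_le S.card) hP0
    refine ⟨l, hl, fun l' h1 h2 h3 => ?_⟩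
    rw [hlm]
    exact Nat.le_findGreatest (hbound l' h1 h2) ⟨l', rfl, h1, h2, h3⟩
  have hpos : 0 < l.length := by
    obtain ⟨v, hv⟩ := hne
    exact hmax [v] (by simp) (by simpa using hv) (by simp)
  obtain ⟨a, t, rfl⟩ : ∃ a t, l = a :: t := List.exists_cons_of_length_pos hpos
  set z := (a :: t).getLast (by simp) with hz
  have ha_nb : ∀ w ∈ S.filter (G.Adj a), w ∈ a :: t := by
    intro w hw
    rw [mem_filter] at hw
    by_contra hnot
    have := hmax (w :: a :: t) (List.nodup_cons.2 ⟨hnot, hl⟩)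
      (by
        intro x hx
        rcases List.mem_cons.1 hx with rfl | hx
        · exact hw.1
        · exact hlS x hx)
      (List.isChain_cons_cons.2 ⟨hw.2.symm, hlc⟩)
    simp at this
  have hz_nb : ∀ w ∈ S.filter (G.Adj z), w ∈ a :: t := by
    intro w hw
    rw [mem_filter] at hw
    by_contra hnot
    have := hmax ((a :: t) ++ [w])
      (by
        rw [List.nodup_append]
        refine ⟨hl, by simp, ?_⟩
        intro x hx y hy hxy
        simp only [List.mem_singleton] at hy
        subst hy; subst hxy
        exact hnot hx)
      (by
        intro x hx
        rcases List.mem_append.1 hx with hx | hx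
        · exact hlS x hx
        · simp only [List.mem_singleton] at hx
          subst hx; exact hw.1)
      (by
        rw [List.isChain_append]
        refine ⟨hlc, by simp, ?_⟩
        intro x hx y hy
        rw [List.getLast?_eq_getLast_of_ne_nil (by simp)] at hx
        simp only [Option.mem_def, Option.some.injEq, List.head?_cons] at hx hy
        subst hx; subst hy
        exact hw.2)
    simp at this
  have haS : a ∈ S := hlS a (by simp)
  have hzS : z ∈ S := hlS z (List.getLast_mem _)
  have hlen := hbound _ hl hlS
  simp only [List.length_cons] at hlen
  -- crossing
  obtain ⟨i, hi, hi1, hi2⟩ := exists_common_index t.length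
    (fun i => t.getD i a) (fun i => (a :: t).getD i a)
    (S.filter (G.Adj a)) (S.filter (G.Adj z))
    (by
      intro s hs
      have h1 := ha_nb s hs
      rw [mem_filter] at hs
      rcases List.mem_cons.1 h1 with rfl | h1
      · exact absurd hs.2 (G.loopless.irrefl _)
      · obtain ⟨i, hi, rfl⟩ := List.getElem_of_mem h1
        exact ⟨i, hi, by simp [hi]⟩)
    (by
      intro s hs
      have h1 := hz_nb s hs
      rw [mem_filter] at hs
      obtain ⟨i, hi, rfl⟩ := List.getElem_of_mem h1
      refine ⟨i, ?_, by simp only [List.getD_eq_getElem _ _ hi]⟩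
      by_contra hcon
      have hit : i = t.length := by simp only [List.length_cons] at hi; omega
      apply G.loopless.irrefl z
      have : (a :: t)[i] = z := by
        rw [hz, List.getLast_eq_getElem]; simp [hit]
      rw [this] at hs
      exact hs.2)
    (by
      have h1 := hdeg a haS
      have h2 := hdeg z hzS
      omega)
  have hi' : i < (a :: t).length := by simp; omega
  simp only [List.getD_eq_getElem _ _ hi, List.getD_eq_getElem _ _ hi', mem_filter] at hi1 hi2
  -- cyclic list
  obtain ⟨c, hperm, hcyc⟩ : ∃ c : List V, c.Perm (a :: t) ∧ Cycle.Chain G.Adj (c : Cycle V) := by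
    refine ⟨a :: (t.take i ++ (t.drop i).reverse), ?_, ?_⟩
    · refine List.Perm.cons a ?_
      refine ((List.reverse_perm _).append_left _).trans ?_
      rw [List.take_append_drop]
    · rw [Cycle.chain_coe_cons]
      have e : a :: (t.take i ++ (t.drop i).reverse ++ [a])
          = (a :: t).take (i+1) ++ ((t.drop i).reverse ++ [a]) := by simp
      rw [e, List.isChain_append]
      refine ⟨hlc.take _, ?_, ?_⟩
      · rw [← List.reverse_cons, List.isChain_reverse]
        have hsymm : (fun x y => G.Adj y x) = G.Adj := by
          ext x y; exact G.adj_comm y x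
        rw [hsymm, List.isChain_cons]
        refine ⟨?_, (List.isChain_cons.1 hlc).2.drop i⟩
        intro y hy
        simp only [List.head?_drop, List.getElem?_eq_getElem hi, Option.mem_def,
          Option.some.injEq] at hy
        subst hy
        exact hi1.2
      · intro x hx y hy
        have hx' : x = (a :: t)[i] := by
          rw [List.getLast?_take] at hx
          simp at hx
          grind
        have hy' : y = z := by
          have h0 : t.drop i ≠ [] := by simp; omega
          have h1 : t ≠ [] := by rintro rfl; simp at hi
          simp only [List.head?_append, List.head?_reverse, List.getLast?_drop] at hy
          rw [hz, List.getLast_cons h1]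
          rw [if_neg (by omega), List.getLast?_eq_getLast_of_ne_nil h1] at hy
          simpa using hy.symm
        subst hx'; subst hy'
        exact hi2.2.symm
  have hcnd : c.Nodup := hperm.nodup_iff.2 hl
  have hcS : ∀ w ∈ c, w ∈ S := fun w hw => hlS w (hperm.mem_iff.1 hw)
  refine ⟨c, hcnd, fun w => ⟨hcS w, fun hw => ?_⟩, hcyc⟩
  by_contra hwc
  -- w has a neighbour on c
  obtain ⟨u, huc, hwu⟩ : ∃ u ∈ c, G.Adj w u := by
    by_contra! hno
    have hsub : S.filter (G.Adj w) ⊆ (S \ c.toFinset) \ {w} := by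
      intro x hx
      rw [mem_filter] at hx
      simp only [mem_sdiff, List.mem_toFinset, mem_singleton]
      refine ⟨⟨hx.1, fun h => hno x h hx.2⟩, ?_⟩
      rintro rfl
      exact G.loopless.irrefl _ hx.2
    have h1 := Finset.card_le_card hsub
    have h2 : S.filter (G.Adj a) ⊆ c.toFinset := by
      intro x hx
      exact List.mem_toFinset.2 (hperm.mem_iff.2 (ha_nb x hx))
    have h3 := Finset.card_le_card h2
    have h4 : c.toFinset ⊆ S := fun x hx => hcS x (List.mem_toFinset.1 hx)
    have h5 := Finset.card_sdiff_of_subset h4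
    have h6 : ((S \ c.toFinset) \ {w}).card = (S \ c.toFinset).card - 1 := by
      rw [Finset.card_sdiff_of_subset] <;> simp [hw, hwc]
    have h7 : 0 < (S \ c.toFinset).card := Finset.card_pos.2 ⟨w, by simp [hw, hwc]⟩
    have h8 := hdeg a haS
    have h9 := hdeg w hw
    omega
  obtain ⟨c1, c2, hc12⟩ := List.append_of_mem huc
  have hrot : ((c1 ++ u :: c2 : List V) : Cycle V) = ((u :: (c2 ++ c1) : List V) : Cycle V) := by
    rw [Cycle.coe_eq_coe, ← List.cons_append]
    exact List.isRotated_append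
  rw [hc12, hrot, Cycle.chain_coe_cons] at hcyc
  have hp2 : (u :: (c2 ++ c1)).Perm c := by
    rw [hc12, ← List.cons_append]
    exact List.perm_append_comm
  have hch : (u :: (c2 ++ c1)).IsChain G.Adj := by
    rw [← List.cons_append] at hcyc
    exact (List.isChain_append.1 hcyc).1
  have := hmax (w :: u :: (c2 ++ c1))
    (List.nodup_cons.2 ⟨fun h => hwc (hp2.mem_iff.1 h), hp2.nodup_iff.2 hcnd⟩)
    (by
      intro x hx
      rcases List.mem_cons.1 hx with rfl | hx
      · exact hw
      · exact hcS x (hp2.mem_iff.1 hx))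
    (List.isChain_cons_cons.2 ⟨hwu, hch⟩)
  have hl1 := hp2.length_eq
  have hl2 := hperm.length_eq
  rw [List.length_cons, hl1, hl2] at this
  omega

/-- A chain gives a walk. -/
theorem exists_walk_of_chain {V : Type*} (G : SimpleGraph V) (b : V) :
    ∀ (l : List V) (a : V), (a :: (l ++ [b])).IsChain G.Adj →
      ∃ w : G.Walk a b, w.support = a :: (l ++ [b])
  | [], a, h => ⟨.cons (by simpa using h) .nil, by simp⟩
  | c :: l, a, h => by
    rw [List.cons_append, List.isChain_cons_cons] at h
    obtain ⟨w, hw⟩ := exists_walk_of_chain G b l c h.2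
    exact ⟨.cons h.1 w, by simp [hw]⟩

/-- Let `Γ` be a graph of order `N ≥ 3`. If the minimum degree of `Γ` satisfies
`δ(Γ) ≥ (N + 2) / 2`, then `Γ` is edge pancyclic: every edge lies on a cycle of each
length `ℓ` with `3 ≤ ℓ ≤ N`. -/
theorem edge_pancyclic_of_minDegree {V : Type*} [Fintype V] (G : SimpleGraph V)
    [DecidableRel G.Adj] (hN : 3 ≤ Fintype.card V)
    (hδ : ((Fintype.card V : ℝ) + 2) / 2 ≤ (G.minDegree : ℝ)) :
    ∀ α β : V, G.Adj α β → ∀ ℓ : ℕ, 3 ≤ ℓ → ℓ ≤ Fintype.card V →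
      ∃ (v : V) (w : G.Walk v v), w.IsCycle ∧ w.length = ℓ ∧ s(α, β) ∈ w.edges := by
  classical
  intro α β hαβ ℓ hℓ3 hℓN
  have hδ' : Fintype.card V + 2 ≤ 2 * G.minDegree := by
    have : (Fintype.card V : ℝ) + 2 ≤ 2 * (G.minDegree : ℝ) := by linarith
    exact_mod_cast this
  have hne : α ≠ β := hαβ.ne
  let S : Finset V := Finset.univ \ {α, β}
  have hS : ∀ v, v ∈ S ↔ v ≠ α ∧ v ≠ β := by intro v; simp [S]
  have hScard : S.card = Fintype.card V - 2 := by
    simp only [S]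
    rw [Finset.card_sdiff_of_subset (Finset.subset_univ _), Finset.card_pair hne,
      Finset.card_univ]
  have hnb : ∀ v, S.filter (G.Adj v) = G.neighborFinset v \ {α, β} := by
    intro v; ext x; simp [hS]; tauto
  have hdeg2 : ∀ v, G.minDegree ≤ (S.filter (G.Adj v)).card + 2 := by
    intro v
    have h1 := G.minDegree_le_degree v
    rw [hnb, ← SimpleGraph.card_neighborFinset_eq_degree] at *
    have h2 := Finset.le_card_sdiff {α, β} (G.neighborFinset v)
    rw [Finset.card_pair hne] at h2
    omega
  have hdegα : G.minDegree ≤ (S.filter (G.Adj α)).card + 1 := by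
    have h1 := G.minDegree_le_degree α
    have h3 : S.filter (G.Adj α) = G.neighborFinset α \ {β} := by
      ext x; simp only [Finset.mem_filter, hS, Finset.mem_sdiff, SimpleGraph.mem_neighborFinset,
        Finset.mem_singleton]
      exact ⟨fun h => ⟨h.2, h.1.2⟩, fun h => ⟨⟨h.1.ne', h.2⟩, h.1⟩⟩
    rw [h3]
    rw [← SimpleGraph.card_neighborFinset_eq_degree] at h1
    have h2 := Finset.le_card_sdiff {β} (G.neighborFinset α)
    rw [Finset.card_singleton] at h2
    omega
  have hdegβ : G.minDegree ≤ (S.filter (G.Adj β)).card + 1 := by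
    have h1 := G.minDegree_le_degree β
    have h3 : S.filter (G.Adj β) = G.neighborFinset β \ {α} := by
      ext x; simp only [Finset.mem_filter, hS, Finset.mem_sdiff, SimpleGraph.mem_neighborFinset,
        Finset.mem_singleton]
      exact ⟨fun h => ⟨h.2, h.1.1⟩, fun h => ⟨⟨h.2, h.1.ne'⟩, h.1⟩⟩
    rw [h3]
    rw [← SimpleGraph.card_neighborFinset_eq_degree] at h1
    have h2 := Finset.le_card_sdiff {α} (G.neighborFinset β)
    rw [Finset.card_singleton] at h2
    omega
  obtain ⟨c, hcnd, hcS, hcyc⟩ := dirac_aux G S (Finset.card_pos.1 (by omega)) (by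
    intro v _
    have := hdeg2 v
    omega)
  have hclen : c.length = S.card := by
    rw [← List.toFinset_card_of_nodup hcnd]
    congr 1
    ext x; simp [hcS]
  have hcpos : 0 < c.length := by omega
  obtain ⟨k, rfl⟩ : ∃ k, ℓ = k + 3 := ⟨ℓ - 3, by omega⟩
  have hk : k < c.length := by omega
  obtain ⟨i, hi, hi1, hi2⟩ := exists_common_index c.length
    (fun i => c.getD i α) (fun i => c.getD ((k + i) % c.length) α)
    (S.filter (G.Adj α)) (S.filter (G.Adj β))
    (by
      intro s hs
      have h1 := (hcS s).2 (Finset.mem_filter.1 hs).1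
      obtain ⟨i, hi, rfl⟩ := List.getElem_of_mem h1
      exact ⟨i, hi, by simp [hi]⟩)
    (by
      intro s hs
      have h1 := (hcS s).2 (Finset.mem_filter.1 hs).1
      obtain ⟨i, hi, rfl⟩ := List.getElem_of_mem h1
      refine ⟨(i + (c.length - k)) % c.length, Nat.mod_lt _ hcpos, ?_⟩
      have : (k + (i + (c.length - k)) % c.length) % c.length = i := by
        rw [Nat.add_mod_mod]
        have : k + (i + (c.length - k)) = i + c.length := by omega
        rw [this, Nat.add_mod_right, Nat.mod_eq_of_lt hi]
      simp only [this, List.getD_eq_getElem _ _ hi])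
    (by omega)
  have hi' : (k + i) % c.length < c.length := Nat.mod_lt _ hcpos
  simp only [List.getD_eq_getElem _ _ hi, List.getD_eq_getElem _ _ hi',
    Finset.mem_filter] at hi1 hi2
  -- the rotated list
  obtain ⟨r, hr⟩ : ∃ r, r = c.rotate i := ⟨_, rfl⟩
  have hrlen : r.length = c.length := by simp [hr]
  have hr0 : ∀ h : 0 < r.length, r[0] = (c)[i] := by
    intro h; subst hr; rw [List.getElem_rotate]; simp [Nat.mod_eq_of_lt hi]
  have hrk : ∀ h : k < r.length, r[k] = (c)[(k + i) % c.length] := by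
    intro h; subst hr; rw [List.getElem_rotate]
  have hrnd : r.Nodup := by rw [hr]; exact List.nodup_rotate.2 hcnd
  have hrS : ∀ x ∈ r, x ∈ S := by
    intro x hx; rw [hr, List.mem_rotate] at hx; exact (hcS x).1 hx
  have hrcyc : Cycle.Chain G.Adj (r : Cycle V) := by
    have : (r : Cycle V) = (c : Cycle V) := by
      rw [Cycle.coe_eq_coe, hr]; exact (List.IsRotated.forall c i)
    rw [this]; exact hcyc
  obtain ⟨a, t, rfl⟩ : ∃ a t, r = a :: t := List.exists_cons_of_length_pos (by omega)
  have hra : a = (c)[i] := hr0 (by simp)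
  have hch : (a :: t).IsChain G.Adj := by
    rw [Cycle.chain_coe_cons, ← List.cons_append] at hrcyc
    exact (List.isChain_append.1 hrcyc).1
  have hkr : k < (a :: t).length := by omega
  have hch2 : (a :: (t.take k ++ [β])).IsChain G.Adj := by
    have e : a :: (t.take k ++ [β]) = (a :: t).take (k + 1) ++ [β] := by simp
    rw [e, List.isChain_append]
    refine ⟨hch.take _, by simp, ?_⟩
    intro x hx y hy
    have hx' : x = (a :: t)[k] := by
      rw [List.getLast?_take] at hx
      simp at hx
      grind
    simp at hy
    subst hy
    rw [hx', hrk hkr]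
    exact hi2.2.symm
  obtain ⟨q, hq⟩ := exists_walk_of_chain G β (t.take k) a hch2
  have hmem : ∀ x ∈ a :: t.take k, x ∈ a :: t := by
    intro x hx
    rcases List.mem_cons.1 hx with rfl | hx
    · simp
    · exact List.mem_cons_of_mem _ (List.mem_of_mem_take hx)
  have hαq : α ∉ q.support := by
    rw [hq, ← List.cons_append]
    intro h
    rcases List.mem_append.1 h with h | h
    · exact ((hS α).1 (hrS α (hmem α h))).1 rfl
    · simp at h; exact hne h
  have hβ : β ∉ a :: t.take k := fun h => ((hS β).1 (hrS β (hmem β h))).2 rfl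
  have hqpath : q.IsPath := by
    rw [SimpleGraph.Walk.isPath_def, hq, ← List.cons_append, List.nodup_append]
    refine ⟨?_, by simp, ?_⟩
    · have : (a :: t.take k) = (a :: t).take (k + 1) := by simp
      rw [this]
      exact hrnd.sublist (List.take_sublist _ _)
    · intro x hx y hy hxy
      simp only [List.mem_singleton] at hy
      subst hy; subst hxy
      exact hβ hx
  have hαa : G.Adj α a := by rw [hra]; exact hi1.2
  have hqlen : q.length = k + 1 := by
    have h1 := q.length_support
    rw [hq] at h1
    simp at h1 hkr
    omega
  refine ⟨β, .cons hαβ.symm (.cons hαa q), ?_, ?_, ?_⟩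
  · rw [SimpleGraph.Walk.cons_isCycle_iff]
    refine ⟨hqpath.cons hαq, ?_⟩
    rw [SimpleGraph.Walk.edges_cons, List.mem_cons]
    rintro (h | h)
    · have : β = a := by
        rw [Sym2.eq_iff] at h
        rcases h with h | h
        · exact absurd h.1.symm hne
        · exact h.1
      exact hβ (by simp [this])
    · exact hαq (q.snd_mem_support_of_mem_edges h)
  · simp [hqlen]
  · simp [Sym2.eq_swap]
end

section
/- Let n ≥ 2, let α and β be permutations of {1,…,n} with Δ(α, β) ≥ 2, and let σ be a permutation of {1,…,n} that is a single cycle of length n. Then there exists i ∈ {0, 1, …, n−1} such that Δ(α, σ^i β) = 0, i.e., α(k) ≠ σ^i β(k) for all k ∈ {1,…,n}. -/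
/-- `σ` is a single cycle of length `n` on `Fin n`: the cyclic group generated by `σ`
acts transitively, i.e. every point is reachable from every point by iterating `σ`. -/
def IsSingleNCycle {n : ℕ} (σ : Equiv.Perm (Fin n)) : Prop :=
  ∀ x y : Fin n, ∃ k : ℕ, (σ ^ k) x = y

/-- `Delta σ₁ σ₂` is the number of points `i` with `σ₁ i = σ₂ i`
(the number of fixed points of `σ₁⁻¹ σ₂`). -/
def Delta {n : ℕ} (σ₁ σ₂ : Equiv.Perm (Fin n)) : ℕ :=
  (Finset.univ.filter fun i => σ₁ i = σ₂ i).card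

/-- For `n ≥ 2`, permutations `α, β` with `Δ(α, β) ≥ 2` and a single `n`-cycle `σ`,
there is `i ∈ {0, …, n-1}` with `Δ(α, σ^i β) = 0`, i.e. `α k ≠ σ^i β k` for all `k`. -/
theorem exists_pow_delta_eq_zero (n : ℕ) (hn : 2 ≤ n) (α β σ : Equiv.Perm (Fin n))
    (hΔ : 2 ≤ Delta α β) (hσ : IsSingleNCycle σ) :
    ∃ i < n, Delta α (σ ^ i * β) = 0 ∧ ∀ k, α k ≠ (σ ^ i * β) k := by
  have hc : σ.IsCycleOn ((Finset.univ : Finset (Fin n)) : Set (Fin n)) := by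
    refine ⟨by simpa using σ.bijective, fun x _ y _ => ?_⟩
    obtain ⟨k, hk⟩ := hσ x y
    exact ⟨k, by simpa using hk⟩
  have huniq : ∀ (x : Fin n) (i j : Fin n), (σ ^ (i : ℕ)) x = (σ ^ (j : ℕ)) x → i = j := by
    intro x i j h
    have h' := (hc.pow_apply_eq_pow_apply (Finset.mem_univ x)).1 h
    rw [Finset.card_univ, Fintype.card_fin] at h'
    exact Fin.ext (Nat.ModEq.eq_of_lt_of_lt h' i.2 j.2)
  by_contra! hcon
  have hex : ∀ i : Fin n, ∃ k, α k = (σ ^ (i : ℕ)) (β k) := by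
    intro i
    by_contra! h
    obtain ⟨k, hk⟩ := hcon i i.2 (by
      unfold Delta
      rw [Finset.card_eq_zero, Finset.filter_eq_empty_iff]
      intro k _
      exact h k)
    exact h k hk
  choose f hf using hex
  have hinj : Function.Injective f := by
    intro i j hij
    apply huniq (β (f i)) i j
    rw [← hf i, hij, ← hf j]
  have hsurj : Function.Surjective f := Finite.surjective_of_injective hinj
  obtain ⟨a, ha, b, hb, hab⟩ := Finset.one_lt_card.1 (show 1 < Finset.card _ from hΔ)
  simp only [Finset.mem_filter, Finset.mem_univ, true_and] at ha hb
  have key : ∀ c, α c = β c → c = f ⟨0, by omega⟩ := by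
    intro c h
    obtain ⟨i, rfl⟩ := hsurj c
    congr 1
    apply huniq (β (f i))
    rw [← hf i, h]
    simp
  exact hab ((key a ha).trans (key b hb).symm)
end

section
/- Let n ≥ 2, let α and β be permutations of {1,…,n} with Δ(α, β) = 0, and let σ be a permutation of {1,…,n} that is a single cycle of length n. Then there exists i ∈ {1, …, n−1} such that Δ(α, σ^i β) ≥ 2. -/
theorem exists_small_pow {n : ℕ} (σ : Equiv.Perm (Fin n)) (hσ : IsSingleNCycle σ)
    (x y : Fin n) : ∃ k : ℕ, k < n ∧ (σ ^ k) x = y := by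
  classical
  have hex := hσ x y
  refine ⟨Nat.find hex, ?_, Nat.find_spec hex⟩
  have hmin : ∀ m, (σ ^ m) x = y → Nat.find hex ≤ m := fun m hm => Nat.find_min' hex hm
  have hk := Nat.find_spec hex
  generalize Nat.find hex = k at hmin hk
  have key : ∀ i j : ℕ, i < j → j ≤ k → (σ ^ i) x ≠ (σ ^ j) x := by
    intro i j hij hj h
    have h2 : (σ ^ (k - j + i)) x = y := by
      rw [pow_add, Equiv.Perm.mul_apply, h, ← Equiv.Perm.mul_apply, ← pow_add,
        Nat.sub_add_cancel hj, hk]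
    have := hmin _ h2
    omega
  have hinj : Function.Injective (fun i : Fin (k + 1) => (σ ^ (i : ℕ)) x) := by
    intro i j hij
    rcases lt_trichotomy (i : ℕ) j with h | h | h
    · exact absurd hij (key _ _ h (by omega))
    · exact Fin.ext h
    · exact absurd hij.symm (key _ _ h (by omega))
  have := Fintype.card_le_of_injective _ hinj
  simp only [Fintype.card_fin] at this
  omega

/-- For `n ≥ 2`, permutations `α, β` with `Δ(α, β) = 0` and a single `n`-cycle `σ`,
there is `i ∈ {1, …, n-1}` with `Δ(α, σ^i β) ≥ 2`. -/
theorem exists_pow_delta_ge_two (n : ℕ) (hn : 2 ≤ n) (α β σ : Equiv.Perm (Fin n))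
    (hΔ : Delta α β = 0) (hσ : IsSingleNCycle σ) :
    ∃ i : ℕ, 1 ≤ i ∧ i ≤ n - 1 ∧ 2 ≤ Delta α (σ ^ i * β) := by
  have hne : ∀ x, α x ≠ β x := by
    intro x hx
    have h := Finset.card_eq_zero.mp hΔ
    have hm : x ∈ Finset.univ.filter (fun i => α i = β i) := by simp [hx]
    rw [h] at hm
    simp at hm
  choose k hk hkx using fun x => exists_small_pow σ hσ (β x) (α x)
  have hk1 : ∀ x, 1 ≤ k x := by
    intro x
    by_contra h
    have h0 : k x = 0 := by omega
    have := hkx x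
    rw [h0] at this
    exact hne x (by simpa using this.symm)
  obtain ⟨x, -, y, -, hxy, he⟩ := Finset.exists_ne_map_eq_of_card_lt_of_maps_to
    (s := (Finset.univ : Finset (Fin n))) (t := Finset.Icc 1 (n - 1)) (f := k)
    (by simp; omega)
    (by
      intro x _
      have h1 := hk x
      have h2 := hk1 x
      simp only [Finset.coe_Icc, Set.mem_Icc]
      omega)
  refine ⟨k x, hk1 x, by have := hk x; omega, ?_⟩
  have : 1 < (Finset.univ.filter fun i => α i = (σ ^ k x * β) i).card := by
    rw [Finset.one_lt_card]
    refine ⟨x, ?_, y, ?_, hxy⟩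
    · exact Finset.mem_filter.mpr ⟨Finset.mem_univ _, (hkx x).symm⟩
    · exact Finset.mem_filter.mpr ⟨Finset.mem_univ _, by rw [he]; exact (hkx y).symm⟩
  exact this
end
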